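/- For a real parameter ν > 1/2, an integer k ≥ 0, and real numbers γ, γ′, define W_{ν,γ}^{(k)}(t) as the k-th derivative in t of 2ν/((t−γ)² + ν²). Then ∫_ℝ W_{ν,γ}^{(k)}(t) · W_{ν,γ′}^{(k)}(t) dt = (4π (2k)!)/(2ν)^{2k+1} · w_{ν,k}(γ − γ′), where w_{ν,k}(u) := (2ν)^{2k+1}/(u² + 4ν²)^{2k+1} · Re((2ν − iu)^{2k+1}). -/

import Mathlib

open Real

/-- The weight `w_{ν,k}(u)`. -/
noncomputable def wweight (ν : ℝ) (k : ℕ) (u : ℝ) : ℝ :=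
  (2 * ν) ^ (2 * k + 1) / (u ^ 2 + 4 * ν ^ 2) ^ (2 * k + 1) *
    ((((2 * ν : ℝ) : ℂ) - (u : ℂ) * Complex.I) ^ (2 * k + 1)).re

/-!
The Cayley transform of the upper half-plane that sends `γ + iν` to `0` turns `W_{ν,γ}(t) dt` into
arc length on the unit circle, so the mean value property on the disc gives Poisson's formula
`∫ W_{ν,γ}(t) u(t) dt = 2π u(γ + iν)` for functions `u` that are harmonic up to the boundary, the
point at infinity included. The derivatives of `W_{ν',γ'}` are such functions, being constant
multiples of `Im (t - d)⁻ⁿ` with `d = γ' - iν'` in the lower half-plane. Hence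
`∫ W_{ν,γ} W_{ν',γ'}⁽ⁿ⁾ = 2π W_{ν+ν',γ'}⁽ⁿ⁾(γ)`, and integration by parts reduces the integral of a
product of two derivatives to this one.
-/

open MeasureTheory Metric Set InnerProductSpace
open scoped ContDiff

lemma integral_iteratedDeriv_mul_iteratedDeriv {A : Type*} [NormedRing A] [NormedAlgebra ℝ A]
    {f g : ℝ → A} (hf : ContDiff ℝ ∞ f) (hg : ContDiff ℝ ∞ g)
    (hf₂ : ∀ n, MemLp (iteratedDeriv n f) 2) (hg₂ : ∀ n, MemLp (iteratedDeriv n g) 2) (j k : ℕ) :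
    ∫ t, iteratedDeriv j f t * iteratedDeriv k g t =
      (-1) ^ j * ∫ t, f t * iteratedDeriv (j + k) g t := by
  have hderiv {h : ℝ → A} (hh : ContDiff ℝ ∞ h) (n : ℕ) (t : ℝ) :
      HasDerivAt (iteratedDeriv n h) (iteratedDeriv (n + 1) h t) t := by
    rw [iteratedDeriv_succ]
    exact (hh.differentiable_iteratedDeriv n (by exact_mod_cast WithTop.coe_lt_top n) t).hasDerivAt
  have hint (m n : ℕ) : Integrable (iteratedDeriv m f * iteratedDeriv n g) :=
    (hf₂ m).integrable_mul (hg₂ n)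
  induction j generalizing k with
  | zero => simp
  | succ j ih =>
    have hparts : ∫ t, iteratedDeriv j f t * iteratedDeriv (k + 1) g t =
        -∫ t, iteratedDeriv (j + 1) f t * iteratedDeriv k g t :=
      integral_mul_deriv_eq_deriv_mul_of_integrable (fun t _ => hderiv hf j t)
        (fun t _ => hderiv hg k t) (hint _ _) (hint _ _) (hint _ _)
    rw [← neg_eq_iff_eq_neg.2 hparts, ih, pow_succ', add_right_comm, add_assoc, neg_one_mul,
      neg_mul]

lemma ofReal_sub_ne_zero {d : ℂ} (hd : d.im ≠ 0) (t : ℝ) : (t : ℂ) - d ≠ 0 :=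
  fun h => hd (by simpa using congrArg Complex.im h)

lemma hasDerivAt_inv_ofReal_sub_pow {d : ℂ} (hd : d.im ≠ 0) (n : ℕ) (t : ℝ) :
    HasDerivAt (fun s : ℝ => ((s - d) ^ n)⁻¹) (-n * ((t - d) ^ (n + 1))⁻¹) t := by
  have hzpow := (hasDerivAt_zpow (-n) (t - d) (.inl (ofReal_sub_ne_zero hd t))).comp t
    (Complex.ofRealCLM.hasDerivAt.sub_const d)
  have hexp : (-n - 1 : ℤ) = -(n + 1 : ℕ) := by push_cast; ring
  simpa only [Function.comp_def, hexp, zpow_neg, zpow_natCast, Int.cast_neg, Int.cast_natCast,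
    mul_one, Complex.ofRealCLM_apply, Complex.ofReal_one] using hzpow

/-- The kernel `W_{ν,γ}(t) = 2ν / ((t - γ)² + ν²)`: up to the factor `2π`, the Poisson kernel of the
upper half-plane at the point `γ + iν`. -/
noncomputable def lorentzian (ν γ : ℝ) : ℝ → ℝ := fun t =>
  2 * ν / ((t - γ) ^ 2 + ν ^ 2)

section Lorentzian

variable {ν ν' : ℝ}

lemma iteratedDeriv_lorentzian (hν : ν ≠ 0) (γ : ℝ) (n : ℕ) (t : ℝ) :
    iteratedDeriv n (lorentzian ν γ) t =
      -2 * (-1) ^ n * n.factorial * (((t - (γ - ν * Complex.I) : ℂ) ^ (n + 1))⁻¹).im := by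
  induction n generalizing t with
  | zero =>
    simp only [iteratedDeriv_zero, lorentzian, zero_add, pow_one, Complex.inv_im,
      Complex.normSq_apply, Complex.sub_re, Complex.sub_im, Complex.mul_re, Complex.mul_im,
      Complex.ofReal_re, Complex.ofReal_im, Complex.I_re, Complex.I_im, Nat.factorial_zero,
      Nat.cast_one]
    ring
  | succ n ih =>
    have hpow := hasDerivAt_inv_ofReal_sub_pow (d := γ - ν * Complex.I) (by simpa using hν)
      (n + 1) t
    have him := Complex.imCLM.hasFDerivAt.comp_hasDerivAt t hpow
    rw [iteratedDeriv_succ, funext ih]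
    refine (him.const_mul _).deriv.trans ?_
    rw [Complex.imCLM_apply, ← Complex.ofReal_natCast, ← Complex.ofReal_neg,
      Complex.im_ofReal_mul, Nat.factorial_succ]
    push_cast
    ring

lemma contDiff_lorentzian (hν : ν ≠ 0) (γ : ℝ) : ContDiff ℝ ∞ (lorentzian ν γ) :=
  ContDiff.div (by fun_prop) (by fun_prop) fun t => by positivity

lemma integrable_lorentzian (hν : ν ≠ 0) (γ : ℝ) : Integrable (lorentzian ν γ) := by
  refine (((integrable_inv_one_add_sq.comp_div hν).comp_sub_right γ).const_mul (2 / ν)).congr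
    (.of_forall fun t => ?_)
  simp only [lorentzian]
  field_simp
  ring

lemma lorentzian_eq_inv_norm_sq (ν γ t : ℝ) :
    lorentzian ν γ t = 2 * ν * (‖(t - (γ - ν * Complex.I) : ℂ)‖ ^ 2)⁻¹ := by
  rw [lorentzian, div_eq_mul_inv, Complex.sq_norm, Complex.normSq_apply]
  simp [sq]

lemma sq_iteratedDeriv_lorentzian_le (hν : ν ≠ 0) (γ : ℝ) (n : ℕ) (t : ℝ) :
    iteratedDeriv n (lorentzian ν γ) t ^ 2 ≤
      2 * n.factorial ^ 2 / ν ^ (2 * n + 1) * lorentzian ν γ t := by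
  rw [iteratedDeriv_lorentzian hν, lorentzian_eq_inv_norm_sq]
  have hν_le : |ν| ≤ ‖(t - (γ - ν * Complex.I) : ℂ)‖ := by
    simpa using Complex.abs_im_le_norm (t - (γ - ν * Complex.I) : ℂ)
  generalize (t - (γ - ν * Complex.I) : ℂ) = z at *
  have hz : 0 < ‖z‖ := (abs_pos.2 hν).trans_le hν_le
  have him : ((z ^ (n + 1))⁻¹).im ^ 2 ≤ (ν ^ (2 * n))⁻¹ * (‖z‖ ^ 2)⁻¹ := by
    calc ((z ^ (n + 1))⁻¹).im ^ 2 ≤ ‖(z ^ (n + 1))⁻¹‖ ^ 2 :=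
          sq_le_sq.2 (by simpa only [abs_norm] using Complex.abs_im_le_norm (z ^ (n + 1))⁻¹)
      _ = (‖z‖ ^ (2 * n))⁻¹ * (‖z‖ ^ 2)⁻¹ := by
          rw [norm_inv, norm_pow, inv_pow, ← mul_inv, ← pow_mul, ← pow_add]
          ring_nf
      _ ≤ (|ν| ^ (2 * n))⁻¹ * (‖z‖ ^ 2)⁻¹ := by gcongr
      _ = (ν ^ (2 * n))⁻¹ * (‖z‖ ^ 2)⁻¹ := by rw [(even_two_mul n).pow_abs]
  calc (-2 * (-1) ^ n * n.factorial * ((z ^ (n + 1))⁻¹).im) ^ 2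
      = 4 * n.factorial ^ 2 * ((z ^ (n + 1))⁻¹).im ^ 2 := by
        rw [mul_pow, mul_pow, mul_pow, ← pow_mul, (even_two.mul_left n).neg_one_pow]
        norm_num
    _ ≤ 4 * n.factorial ^ 2 * ((ν ^ (2 * n))⁻¹ * (‖z‖ ^ 2)⁻¹) := by gcongr
    _ = 2 * n.factorial ^ 2 / ν ^ (2 * n + 1) * (2 * ν * (‖z‖ ^ 2)⁻¹) := by
        field_simp
        ring

lemma memLp_two_iteratedDeriv_lorentzian (hν : ν ≠ 0) (γ : ℝ) (n : ℕ) :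
    MemLp (iteratedDeriv n (lorentzian ν γ)) 2 := by
  have hcont : Continuous (iteratedDeriv n (lorentzian ν γ)) :=
    (contDiff_lorentzian hν γ).continuous_iteratedDeriv n (by exact_mod_cast le_top)
  refine (memLp_two_iff_integrable_sq hcont.aestronglyMeasurable).2 ?_
  refine ((integrable_lorentzian hν γ).const_mul (2 * n.factorial ^ 2 / ν ^ (2 * n + 1))).mono'
    (hcont.pow 2).aestronglyMeasurable (.of_forall fun t => ?_)
  rw [norm_of_nonneg (sq_nonneg _)]
  exact sq_iteratedDeriv_lorentzian_le hν γ n t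

section Poisson

/-- The Cayley transform that maps the upper half-plane onto the unit disc and `γ + iν` to `0`. -/
noncomputable def cayley (ν γ : ℝ) (z : ℂ) : ℂ :=
  (z - (γ + ν * Complex.I)) / (z - (γ - ν * Complex.I))

lemma circleMap_zero_one_two_mul_arctan_add_pi (x : ℝ) :
    circleMap 0 1 (2 * arctan x + π) = cayley 1 0 x := by
  have hexp : Complex.exp (arctan x * Complex.I) = cos (arctan x) * (1 + x * Complex.I) := by
    have hsin : sin (arctan x) = cos (arctan x) * x := by
      rw [← tan_mul_cos (cos_arctan_pos x).ne', tan_arctan, mul_comm]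
    rw [Complex.exp_mul_I, ← Complex.ofReal_cos, ← Complex.ofReal_sin, hsin]
    push_cast
    ring
  have hcircle : circleMap 0 1 (2 * arctan x + π) =
      -(cos (arctan x) * (1 + x * Complex.I)) ^ 2 := by
    rw [← hexp, ← Complex.exp_nat_mul]
    simp [circleMap, add_mul, Complex.exp_add, mul_assoc]
  have hcos : (cos (arctan x) : ℂ) ^ 2 * (1 + x ^ 2) = 1 := by
    have : cos (arctan x) ^ 2 * (1 + x ^ 2) = 1 := by rw [cos_sq_arctan]; field_simp
    exact_mod_cast this
  have hne : (x + Complex.I : ℂ) ≠ 0 := by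
    simpa using ofReal_sub_ne_zero (d := -Complex.I) (by simp) x
  have hcayley : cayley 1 0 x = (x - Complex.I) / (x + Complex.I) := by simp [cayley]
  rw [hcircle, hcayley, eq_div_iff hne]
  linear_combination (x - Complex.I) * hcos -
    cos (arctan x) ^ 2 * (2 * x + x ^ 3 + x ^ 2 * Complex.I) * Complex.I_sq

lemma cayley_one_zero_sub_div (hν : ν ≠ 0) (γ : ℝ) (z : ℂ) :
    cayley 1 0 ((z - γ) / ν) = cayley ν γ z := by
  have : (ν : ℂ) ≠ 0 := by exact_mod_cast hν
  simp only [cayley]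
  rw [← mul_div_mul_left _ _ this]
  push_cast
  congr 1 <;> field_simp <;> ring

lemma hasDerivAt_two_mul_arctan_sub_div_add_pi (hν : ν ≠ 0) (γ t : ℝ) :
    HasDerivAt (fun s => 2 * arctan ((s - γ) / ν) + π) (lorentzian ν γ t) t := by
  refine (((((hasDerivAt_id t).sub_const γ).div_const ν).arctan.const_mul 2).add_const
    π).congr_deriv ?_
  simp only [lorentzian, id_eq]
  field_simp
  ring

lemma range_two_mul_arctan_sub_div_add_pi (hν : ν ≠ 0) (γ : ℝ) :
    range (fun t => 2 * arctan ((t - γ) / ν) + π) = Ioo 0 (2 * π) := by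
  ext θ
  simp only [mem_range, mem_Ioo]
  constructor
  · rintro ⟨t, rfl⟩
    constructor <;> linarith [neg_pi_div_two_lt_arctan ((t - γ) / ν),
      arctan_lt_pi_div_two ((t - γ) / ν)]
  · rintro ⟨hθ_pos, hθ_lt⟩
    refine ⟨γ + ν * tan ((θ - π) / 2), ?_⟩
    rw [add_sub_cancel_left, mul_div_cancel_left₀ _ hν, arctan_tan (by linarith) (by linarith)]
    ring

variable {E : Type*} [NormedAddCommGroup E] [NormedSpace ℝ E]

lemma integral_lorentzian_smul_comp_arctan (hν : 0 < ν) (γ : ℝ) (g : ℝ → E) :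
    ∫ t, lorentzian ν γ t • g (2 * arctan ((t - γ) / ν) + π) = ∫ θ in (0)..(2 * π), g θ := by
  have hnonneg (t : ℝ) : 0 ≤ lorentzian ν γ t := by unfold lorentzian; positivity
  have hinj : Function.Injective fun t => 2 * arctan ((t - γ) / ν) + π := fun s t hst => by
    have := arctan_injective (mul_left_cancel₀ two_ne_zero (add_right_cancel hst))
    exact sub_left_injective ((div_left_inj' hν.ne').1 this)
  rw [intervalIntegral.integral_of_le two_pi_pos.le, integral_Ioc_eq_integral_Ioo,
    ← range_two_mul_arctan_sub_div_add_pi hν.ne' γ, ← image_univ,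
    integral_image_eq_integral_abs_deriv_smul .univ
      (fun t _ => (hasDerivAt_two_mul_arctan_sub_div_add_pi hν.ne' γ t).hasDerivWithinAt)
      hinj.injOn]
  simp only [abs_of_nonneg (hnonneg _), Measure.restrict_univ]

lemma integral_lorentzian_smul_comp_cayley (hν : 0 < ν) (γ : ℝ) (u : ℂ → E) :
    ∫ t : ℝ, lorentzian ν γ t • u (cayley ν γ t) = (2 * π) • circleAverage u 0 1 := by
  rw [circleAverage_def, smul_inv_smul₀ two_pi_pos.ne',
    ← integral_lorentzian_smul_comp_arctan hν γ fun θ => u (circleMap 0 1 θ)]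
  simp only [circleMap_zero_one_two_mul_arctan_add_pi, Complex.ofReal_div, Complex.ofReal_sub,
    cayley_one_zero_sub_div hν.ne']

lemma integral_lorentzian_smul_comp_cayley_of_harmonicOnNhd [CompleteSpace E] (hν : 0 < ν) (γ : ℝ)
    {u : ℂ → E} (hu : HarmonicOnNhd u (closedBall 0 1)) :
    ∫ t : ℝ, lorentzian ν γ t • u (cayley ν γ t) = (2 * π) • u 0 := by
  rw [integral_lorentzian_smul_comp_cayley hν,
    InnerProductSpace.HarmonicOnNhd.circleAverage_eq (by simpa only [abs_one] using hu)]

lemma one_sub_cayley_div (hν : ν ≠ 0) (γ : ℝ) (d : ℂ) {z : ℂ} (hz : z - (γ - ν * Complex.I) ≠ 0) :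
    (1 - cayley ν γ z) /
        (γ + ν * Complex.I - d - (γ - ν * Complex.I - d) * cayley ν γ z) = (z - d)⁻¹ := by
  have hnum : 1 - cayley ν γ z = 2 * ν * Complex.I / (z - (γ - ν * Complex.I)) := by
    rw [cayley]
    field_simp
    ring
  have hdenom : γ + ν * Complex.I - d - (γ - ν * Complex.I - d) * cayley ν γ z =
      2 * ν * Complex.I / (z - (γ - ν * Complex.I)) * (z - d) := by
    rw [cayley]
    field_simp
    ring
  have hne : 2 * ν * Complex.I / (z - (γ - ν * Complex.I)) ≠ 0 :=
    div_ne_zero (by simpa using hν) hz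
  rw [hnum, hdenom, div_mul_cancel_left₀ hne]

lemma norm_sub_mul_I_sub_lt (hν : 0 < ν) (γ : ℝ) {d : ℂ} (hd : d.im < 0) :
    ‖(γ - ν * Complex.I - d : ℂ)‖ < ‖(γ + ν * Complex.I - d : ℂ)‖ := by
  rw [← sq_lt_sq₀ (norm_nonneg _) (norm_nonneg _), Complex.sq_norm, Complex.sq_norm,
    Complex.normSq_apply, Complex.normSq_apply]
  simp only [Complex.add_re, Complex.add_im, Complex.sub_re, Complex.sub_im, Complex.mul_re,
    Complex.mul_im, Complex.ofReal_re, Complex.ofReal_im, Complex.I_re, Complex.I_im]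
  nlinarith

lemma sub_mul_ne_zero_of_norm_lt {a b w : ℂ} (hba : ‖b‖ < ‖a‖) (hw : ‖w‖ ≤ 1) :
    a - b * w ≠ 0 := fun h => by
  have : ‖a‖ ≤ ‖b‖ := by
    rw [sub_eq_zero.1 h, norm_mul]
    exact mul_le_of_le_one_right (norm_nonneg b) hw
  exact this.not_gt hba

lemma integral_lorentzian_mul_im_inv_sub_pow (hν : 0 < ν) (γ : ℝ) {d : ℂ} (hd : d.im < 0) (n : ℕ) :
    ∫ t : ℝ, lorentzian ν γ t * (((t - d) ^ n)⁻¹).im =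
      2 * π * (((γ + ν * Complex.I - d) ^ n)⁻¹).im := by
  set a : ℂ := γ + ν * Complex.I - d
  set b : ℂ := γ - ν * Complex.I - d
  have hharm : HarmonicOnNhd (fun w => (((1 - w) / (a - b * w)) ^ n).im) (closedBall 0 1) :=
    fun w hw => by
      have hdenom : a - b * w ≠ 0 :=
        sub_mul_ne_zero_of_norm_lt (norm_sub_mul_I_sub_lt hν γ hd) (by simpa using hw)
      exact AnalyticAt.harmonicAt_im (by fun_prop (disch := exact hdenom))
  have hcayley (t : ℝ) : (1 - cayley ν γ t) / (a - b * cayley ν γ t) = (t - d : ℂ)⁻¹ :=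
    one_sub_cayley_div hν.ne' γ d (ofReal_sub_ne_zero (by simpa using hν.ne') t)
  simpa [hcayley] using integral_lorentzian_smul_comp_cayley_of_harmonicOnNhd hν γ hharm

end Poisson

lemma integral_lorentzian_mul_iteratedDeriv_lorentzian (hν : 0 < ν) (hν' : 0 < ν') (γ γ' : ℝ)
    (n : ℕ) :
    ∫ t, lorentzian ν γ t * iteratedDeriv n (lorentzian ν' γ') t =
      2 * π * iteratedDeriv n (lorentzian (ν + ν') γ') γ := by
  have hpole : (γ + ν * Complex.I - (γ' - ν' * Complex.I) : ℂ) =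
      γ - (γ' - (ν + ν' : ℝ) * Complex.I) := by
    push_cast
    ring
  simp only [iteratedDeriv_lorentzian hν'.ne', iteratedDeriv_lorentzian (add_pos hν hν').ne',
    mul_left_comm (lorentzian ν γ _), integral_const_mul]
  rw [integral_lorentzian_mul_im_inv_sub_pow hν γ (by simpa using hν'), hpole, mul_left_comm]

theorem integral_iteratedDeriv_lorentzian_mul (hν : 0 < ν) (hν' : 0 < ν') (γ γ' : ℝ) (j k : ℕ) :
    ∫ t, iteratedDeriv j (lorentzian ν γ) t * iteratedDeriv k (lorentzian ν' γ') t =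
      (-1) ^ j * (2 * π * iteratedDeriv (j + k) (lorentzian (ν + ν') γ') γ) := by
  rw [integral_iteratedDeriv_mul_iteratedDeriv
    (contDiff_lorentzian hν.ne' γ) (contDiff_lorentzian hν'.ne' γ')
    (memLp_two_iteratedDeriv_lorentzian hν.ne' γ) (memLp_two_iteratedDeriv_lorentzian hν'.ne' γ'),
    integral_lorentzian_mul_iteratedDeriv_lorentzian hν hν']

lemma im_inv_I_mul_pow_two_mul_add_one (z : ℂ) (k : ℕ) :
    (((Complex.I * z) ^ (2 * k + 1))⁻¹).im =
      -(-1) ^ k * ((z ^ (2 * k + 1)).re / Complex.normSq z ^ (2 * k + 1)) := by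
  have hI : (Complex.I ^ (2 * k + 1))⁻¹ = ((-(-1) ^ k : ℝ) : ℂ) * Complex.I := by
    rw [pow_succ, pow_mul, Complex.I_sq, mul_inv, Complex.inv_I, ← inv_pow]
    norm_num
  rw [mul_pow, mul_inv, hI, mul_assoc, Complex.im_ofReal_mul, Complex.I_mul_im, Complex.inv_re,
    map_pow]

lemma iteratedDeriv_two_mul_lorentzian (hν : ν ≠ 0) (γ γ' : ℝ) (k : ℕ) :
    iteratedDeriv (2 * k) (lorentzian (2 * ν) γ') γ =
      (-1) ^ k * (2 * (2 * k).factorial / (2 * ν) ^ (2 * k + 1) * wweight ν k (γ - γ')) := by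
  set z : ℂ := ((2 * ν : ℝ) : ℂ) - ((γ - γ' : ℝ) : ℂ) * Complex.I with hz
  have hnormSq : Complex.normSq z = (γ - γ') ^ 2 + 4 * ν ^ 2 := by
    rw [Complex.normSq_apply]
    simp only [hz, Complex.sub_re, Complex.sub_im, Complex.mul_re, Complex.mul_im,
      Complex.ofReal_re, Complex.ofReal_im, Complex.I_re, Complex.I_im]
    ring
  have hrotate : (γ - (γ' - (2 * ν : ℝ) * Complex.I) : ℂ) = Complex.I * z := by
    rw [hz]
    push_cast
    linear_combination (γ - γ' : ℂ) * Complex.I_sq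
  rw [iteratedDeriv_lorentzian (mul_ne_zero two_ne_zero hν), hrotate,
    im_inv_I_mul_pow_two_mul_add_one, hnormSq, (even_two_mul k).neg_one_pow, wweight, ← hz]
  field_simp

theorem integral_W_deriv_product_general (hν : 0 < ν) (hν' : 0 < ν') (k : ℕ) (γ γ' : ℝ) :
    ∫ t, iteratedDeriv k (lorentzian ν γ) t * iteratedDeriv k (lorentzian ν' γ') t =
      4 * π * (2 * k).factorial / (ν + ν') ^ (2 * k + 1) *
        wweight ((ν + ν') / 2) k (γ - γ') := by
  have hwidth : 2 * ((ν + ν') / 2) = ν + ν' := mul_div_cancel₀ _ two_ne_zero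
  have hderiv := iteratedDeriv_two_mul_lorentzian (ν := (ν + ν') / 2) (by positivity) γ γ' k
  rw [hwidth] at hderiv
  have hsign : (-1 : ℝ) ^ k * (-1) ^ k = 1 := by rw [← mul_pow, neg_one_mul, neg_neg, one_pow]
  rw [integral_iteratedDeriv_lorentzian_mul hν hν', ← two_mul, hderiv, mul_left_comm (2 * π),
    ← mul_assoc, hsign]
  ring

end Lorentzian

theorem integral_W_deriv_product (ν : ℝ) (hν : 1/2 < ν) (k : ℕ) (γ γ' : ℝ) :
    ∫ t : ℝ, iteratedDeriv k (fun s : ℝ => 2 * ν / ((s - γ) ^ 2 + ν ^ 2)) t *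
        iteratedDeriv k (fun s : ℝ => 2 * ν / ((s - γ') ^ 2 + ν ^ 2)) t =
      4 * Real.pi * ((2 * k).factorial : ℝ) / (2 * ν) ^ (2 * k + 1) * wweight ν k (γ - γ') := by
  have hpos : 0 < ν := by linarith
  have hequal_widths := integral_W_deriv_product_general hpos hpos k γ γ'
  rwa [add_self_div_two, ← two_mul ν] at hequal_widths
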